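/- Let n ≥ 1 and 1 < p < ∞, and define V_p : ℝⁿ → ℝⁿ by V_p(ξ) = |ξ|^{(p−2)/2} ξ (with V_p(0) = 0), where |·| is the Euclidean norm. Then there exist positive constants c₁ and c₂, depending only on n and p, such that for all ξ, η ∈ ℝⁿ with ξ ≠ η, c₁ (|ξ|² + |η|²)^{(p−2)/2} ≤ |V_p(ξ) − V_p(η)|² / |ξ − η|² ≤ c₂ (|ξ|² + |η|²)^{(p−2)/2}. -/

import Mathlib

/-!
Write `a = (p - 2) / 2`, so that `a + 1 > 0`, and by symmetry assume `‖η‖ ≤ ‖ξ‖`. Then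
`(‖ξ‖² + ‖η‖²) ^ a` is comparable to `(‖ξ‖ ^ a)²`, and it remains to show that `‖V ξ - V η‖²` is
comparable to `(‖ξ‖ ^ a)² ‖ξ - η‖²`.

* If `‖η‖ ≤ ‖ξ‖ / 2`, then by the triangle inequality `‖V ξ - V η‖` is comparable to `‖ξ‖ ^ (a + 1)`
  and `‖ξ - η‖` to `‖ξ‖` (`Vp_far`).
* If `‖ξ‖ / 2 ≤ ‖η‖ ≤ ‖ξ‖`, put `s = ‖ξ‖`, `t = ‖η‖` and `D = s t - ⟪ξ, η⟫ ≥ 0`. Then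
  `‖ξ - η‖² = (s - t)² + 2 D` and
  `‖V ξ - V η‖² = (s ^ (a + 1) - t ^ (a + 1))² + 2 s ^ a t ^ a D`.
  By the mean value theorem the two expressions are comparable term by term, because every number
  in `[s / 2, s]` has `a`-th power comparable to `s ^ a` (`Vp_near`).
-/

/-- The constant `2 ^ |a|` bounds the distortion of the power function `x ↦ x ^ a` on
`[s / 2, 2 s]`, whatever the sign of `a`. -/
lemma rpow_comparable (a s x : ℝ) (hs : 0 < s) (h1 : s / 2 ≤ x) (h2 : x ≤ 2 * s) :
    s ^ a ≤ (2 : ℝ) ^ |a| * x ^ a ∧ x ^ a ≤ (2 : ℝ) ^ |a| * s ^ a := by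
  have hx : 0 < x := by linarith
  rcases le_total 0 a with ha | ha
  · rw [abs_of_nonneg ha, ← Real.mul_rpow (by norm_num) hx.le,
      ← Real.mul_rpow (by norm_num) hs.le]
    exact ⟨Real.rpow_le_rpow hs.le (by linarith) ha, Real.rpow_le_rpow hx.le h2 ha⟩
  · have e : (2 : ℝ) ^ |a| = (1 / 2 : ℝ) ^ a := by
      rw [abs_of_nonpos ha, Real.rpow_neg (by norm_num), one_div, Real.inv_rpow (by norm_num)]
    rw [e, ← Real.mul_rpow (by norm_num) hx.le, ← Real.mul_rpow (by norm_num) hs.le]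
    exact ⟨Real.rpow_le_rpow_of_nonpos (by linarith) (by linarith) ha,
      Real.rpow_le_rpow_of_nonpos (by linarith) (by linarith) ha⟩

lemma rpow_sub_eq (a s t : ℝ) (ht : 0 < t) (hts : t ≤ s) :
    ∃ c, t ≤ c ∧ c ≤ s ∧ s ^ (a + 1) - t ^ (a + 1) = (a + 1) * c ^ a * (s - t) := by
  rcases hts.eq_or_lt with rfl | hlt
  · exact ⟨t, le_rfl, le_rfl, by simp⟩
  · have hd : ∀ x ∈ Set.Icc t s,
        HasDerivAt (fun x : ℝ => x ^ (a + 1)) ((a + 1) * x ^ a) x := by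
      intro x hx
      have := Real.hasDerivAt_rpow_const (x := x) (p := a + 1) (Or.inl (by linarith [hx.1]))
      simpa using this
    obtain ⟨c, hc, h⟩ := exists_hasDerivAt_eq_slope (fun x : ℝ => x ^ (a + 1))
      (fun x => (a + 1) * x ^ a) hlt (fun x hx => (hd x hx).continuousAt.continuousWithinAt)
      (fun x hx => hd x ⟨hx.1.le, hx.2.le⟩)
    refine ⟨c, hc.1.le, hc.2.le, ?_⟩
    rw [h, div_mul_cancel₀]
    linarith

section

variable {E : Type*} [NormedAddCommGroup E] [InnerProductSpace ℝ E]

lemma norm_rpow_smul (a : ℝ) (ha : 0 < a + 1) (x : E) :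
    ‖‖x‖ ^ a • x‖ = ‖x‖ ^ (a + 1) := by
  rw [norm_smul, Real.norm_of_nonneg (by positivity)]
  rcases (norm_nonneg x).eq_or_lt with h | h
  · rw [← h, Real.zero_rpow ha.ne', mul_zero]
  · rw [Real.rpow_add_one h.ne']

lemma Vp_far (a : ℝ) (ha : 0 < a + 1) (ξ η : E) (h0 : 0 < ‖ξ‖) (h : ‖η‖ ≤ ‖ξ‖ / 2) :
    ((1 - (1 / 2 : ℝ) ^ (a + 1)) / 2) ^ 2 * ((‖ξ‖ ^ a) ^ 2 * ‖ξ - η‖ ^ 2) ≤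
        ‖‖ξ‖ ^ a • ξ - ‖η‖ ^ a • η‖ ^ 2 ∧
      ‖‖ξ‖ ^ a • ξ - ‖η‖ ^ a • η‖ ^ 2 ≤ 4 ^ 2 * ((‖ξ‖ ^ a) ^ 2 * ‖ξ - η‖ ^ 2) := by
  have hA : 0 < ‖ξ‖ ^ a := by positivity
  have hq : (1 / 2 : ℝ) ^ (a + 1) < 1 := Real.rpow_lt_one (by norm_num) (by norm_num) ha
  have hq0 : (0 : ℝ) < (1 / 2 : ℝ) ^ (a + 1) := by positivity
  have ht : ‖η‖ ^ (a + 1) ≤ (1 / 2 : ℝ) ^ (a + 1) * (‖ξ‖ ^ a * ‖ξ‖) := by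
    rw [← Real.rpow_add_one h0.ne', ← Real.mul_rpow (by norm_num) h0.le]
    exact Real.rpow_le_rpow (norm_nonneg _) (by linarith) ha.le
  have e1 := norm_rpow_smul a ha ξ
  have e2 := norm_rpow_smul a ha η
  rw [Real.rpow_add_one h0.ne'] at e1
  have l1 := norm_sub_norm_le (‖ξ‖ ^ a • ξ) (‖η‖ ^ a • η)
  have u1 := norm_sub_le (‖ξ‖ ^ a • ξ) (‖η‖ ^ a • η)
  have l2 := norm_sub_norm_le ξ η
  have u2 := norm_sub_le ξ η
  rw [e1, e2] at l1 u1
  have hAs : 0 < ‖ξ‖ ^ a * ‖ξ‖ := by positivity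
  constructor
  · rw [← mul_pow, ← mul_pow]
    refine pow_le_pow_left₀ (by have := sub_pos.2 hq; positivity) ?_ 2
    have : ‖ξ‖ ^ a * ‖ξ - η‖ ≤ ‖ξ‖ ^ a * (2 * ‖ξ‖) :=
      mul_le_mul_of_nonneg_left (by linarith) hA.le
    have := mul_le_mul_of_nonneg_left this (by linarith : 0 ≤ (1 - (1 / 2 : ℝ) ^ (a + 1)) / 2)
    linarith
  · rw [← mul_pow, ← mul_pow]
    refine pow_le_pow_left₀ (norm_nonneg _) ?_ 2
    have : ‖ξ‖ ^ a * (‖ξ‖ / 2) ≤ ‖ξ‖ ^ a * ‖ξ - η‖ :=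
      mul_le_mul_of_nonneg_left (by linarith) hA.le
    have := mul_le_mul_of_nonneg_right hq.le hAs.le
    linarith

lemma Vp_near (a : ℝ) (ha : 0 < a + 1) (ξ η : E) (h0 : 0 < ‖ξ‖) (h : ‖ξ‖ / 2 ≤ ‖η‖)
    (h' : ‖η‖ ≤ ‖ξ‖) :
    (min (a + 1) 1 / 2 ^ |a|) ^ 2 * ((‖ξ‖ ^ a) ^ 2 * ‖ξ - η‖ ^ 2) ≤
        ‖‖ξ‖ ^ a • ξ - ‖η‖ ^ a • η‖ ^ 2 ∧
      ‖‖ξ‖ ^ a • ξ - ‖η‖ ^ a • η‖ ^ 2 ≤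
        (max (a + 1) 1 * 2 ^ |a|) ^ 2 * ((‖ξ‖ ^ a) ^ 2 * ‖ξ - η‖ ^ 2) := by
  have ht : 0 < ‖η‖ := by linarith
  obtain ⟨c, hc1, hc2, hc⟩ := rpow_sub_eq a ‖ξ‖ ‖η‖ ht h'
  obtain ⟨b1, b2⟩ := rpow_comparable a ‖ξ‖ ‖η‖ h0 h (by linarith)
  obtain ⟨d1, d2⟩ := rpow_comparable a ‖ξ‖ c h0 (by linarith) (by linarith)
  have hK : 1 ≤ (2 : ℝ) ^ |a| := Real.one_le_rpow (by norm_num) (abs_nonneg a)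
  have hcpos : 0 < c ^ a := Real.rpow_pos_of_pos (by linarith) _
  have hD := real_inner_le_norm ξ η
  have eN : ‖‖ξ‖ ^ a • ξ - ‖η‖ ^ a • η‖ ^ 2 =
      ((a + 1) * c ^ a * (‖ξ‖ - ‖η‖)) ^ 2 +
        ‖ξ‖ ^ a * ‖η‖ ^ a * (2 * (‖ξ‖ * ‖η‖ - inner ℝ ξ η)) := by
    rw [norm_sub_sq_real, norm_rpow_smul a ha, norm_rpow_smul a ha, ← hc, real_inner_smul_left,
      real_inner_smul_right, Real.rpow_add_one h0.ne', Real.rpow_add_one ht.ne']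
    ring
  have eD : ‖ξ - η‖ ^ 2 = (‖ξ‖ - ‖η‖) ^ 2 + 2 * (‖ξ‖ * ‖η‖ - inner ℝ ξ η) := by
    rw [norm_sub_sq_real]
    ring
  rw [eN, eD]
  have hA : 0 < ‖ξ‖ ^ a := by positivity
  have hB : 0 < ‖η‖ ^ a := by positivity
  have hDD : 0 ≤ 2 * (‖ξ‖ * ‖η‖ - inner ℝ ξ η) := by linarith
  have hm0 : 0 < min (a + 1) 1 := lt_min ha one_pos
  have hm1 := min_le_left (a + 1) 1
  have hm2 := min_le_right (a + 1) 1
  have hM1 := le_max_left (a + 1) 1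
  have hM2 := le_max_right (a + 1) 1
  generalize min (a + 1) 1 = m at *
  generalize max (a + 1) 1 = M at *
  generalize (2 : ℝ) ^ |a| = K at *
  generalize ‖ξ‖ ^ a = A at *
  generalize ‖η‖ ^ a = B at *
  generalize c ^ a = C at *
  generalize 2 * (‖ξ‖ * ‖η‖ - inner ℝ ξ η) = D at *
  generalize ‖ξ‖ - ‖η‖ = u at *
  have hK0 : 0 < K := by linarith
  have hM0 : 0 < M := by linarith
  have q1 : (m / K * A) ^ 2 ≤ ((a + 1) * C) ^ 2 := by
    refine pow_le_pow_left₀ (by positivity) ?_ 2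
    rw [div_mul_eq_mul_div, div_le_iff₀ hK0]
    calc m * A ≤ (a + 1) * (K * C) := mul_le_mul hm1 d1 hA.le ha.le
      _ = _ := by ring
  have q2 : (m / K * A) ^ 2 ≤ A * B := by
    have : m / K * A ≤ B := by
      rw [div_mul_eq_mul_div, div_le_iff₀ hK0]
      calc m * A ≤ 1 * (K * B) := mul_le_mul hm2 b1 hA.le one_pos.le
        _ = _ := by ring
    have h2 : m / K * A ≤ A := by
      refine mul_le_of_le_one_left hA.le ?_
      rw [div_le_one hK0]
      linarith
    rw [sq]
    exact mul_le_mul h2 this (by positivity) hA.le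
  have q3 : ((a + 1) * C) ^ 2 ≤ (M * K * A) ^ 2 := by
    refine pow_le_pow_left₀ (by positivity) ?_ 2
    calc (a + 1) * C ≤ M * (K * A) := mul_le_mul hM1 d2 hcpos.le hM0.le
      _ = _ := by ring
  have q4 : A * B ≤ (M * K * A) ^ 2 := by
    have h1 : B ≤ M * K * A := by
      calc B ≤ 1 * (K * A) := by linarith
        _ ≤ M * (K * A) := mul_le_mul_of_nonneg_right hM2 (by positivity)
        _ = _ := by ring
    have h2 : A ≤ M * K * A :=
      le_mul_of_one_le_left hA.le (one_le_mul_of_one_le_of_one_le hM2 hK)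
    rw [sq]
    exact mul_le_mul h2 h1 hB.le (by positivity)
  have hu := sq_nonneg u
  constructor
  · linarith [mul_le_mul_of_nonneg_right q1 hu, mul_le_mul_of_nonneg_right q2 hDD]
  · linarith [mul_le_mul_of_nonneg_right q3 hu, mul_le_mul_of_nonneg_right q4 hDD]

lemma Vp_ordered (a : ℝ) (ha : 0 < a + 1) :
    ∃ k₁ k₂ : ℝ, 0 < k₁ ∧ 0 < k₂ ∧ ∀ ξ η : E, 0 < ‖ξ‖ → ‖η‖ ≤ ‖ξ‖ →
      k₁ * ((‖ξ‖ ^ a) ^ 2 * ‖ξ - η‖ ^ 2) ≤ ‖‖ξ‖ ^ a • ξ - ‖η‖ ^ a • η‖ ^ 2 ∧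
      ‖‖ξ‖ ^ a • ξ - ‖η‖ ^ a • η‖ ^ 2 ≤ k₂ * ((‖ξ‖ ^ a) ^ 2 * ‖ξ - η‖ ^ 2) := by
  have hq : 0 < 1 - (1 / 2 : ℝ) ^ (a + 1) :=
    sub_pos.2 (Real.rpow_lt_one (by norm_num) (by norm_num) ha)
  have hm : 0 < min (a + 1) 1 := lt_min ha one_pos
  refine ⟨min (((1 - (1 / 2 : ℝ) ^ (a + 1)) / 2) ^ 2) ((min (a + 1) 1 / 2 ^ |a|) ^ 2),
    max (4 ^ 2) ((max (a + 1) 1 * 2 ^ |a|) ^ 2), lt_min (by positivity) (by positivity),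
    lt_max_of_lt_left (by norm_num), ?_⟩
  intro ξ η h0 h
  have hX : 0 ≤ (‖ξ‖ ^ a) ^ 2 * ‖ξ - η‖ ^ 2 := by positivity
  rcases le_total ‖η‖ (‖ξ‖ / 2) with h1 | h1
  · obtain ⟨l, u⟩ := Vp_far a ha ξ η h0 h1
    exact ⟨(mul_le_mul_of_nonneg_right (min_le_left _ _) hX).trans l,
      u.trans (mul_le_mul_of_nonneg_right (le_max_left _ _) hX)⟩
  · obtain ⟨l, u⟩ := Vp_near a ha ξ η h0 h1 h
    exact ⟨(mul_le_mul_of_nonneg_right (min_le_right _ _) hX).trans l,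
      u.trans (mul_le_mul_of_nonneg_right (le_max_right _ _) hX)⟩

end

/-- For `1 < p < ∞` and `V_p ξ = |ξ|^{(p-2)/2} ξ`, there are constants
`c₁, c₂ > 0` depending only on `n` and `p` such that
`c₁ (|ξ|² + |η|²)^{(p-2)/2} ≤ |V_p ξ - V_p η|² / |ξ - η|² ≤ c₂ (|ξ|² + |η|²)^{(p-2)/2}`. -/
theorem Vp_equivalence (n : ℕ) (hn : 1 ≤ n) (p : ℝ) (hp : 1 < p)
    (V : EuclideanSpace ℝ (Fin n) → EuclideanSpace ℝ (Fin n))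
    (hV : ∀ ξ, V ξ = ‖ξ‖ ^ ((p - 2) / 2) • ξ) :
    ∃ c₁ c₂ : ℝ, 0 < c₁ ∧ 0 < c₂ ∧
      ∀ ξ η : EuclideanSpace ℝ (Fin n), ξ ≠ η →
        c₁ * (‖ξ‖ ^ 2 + ‖η‖ ^ 2) ^ ((p - 2) / 2) ≤ ‖V ξ - V η‖ ^ 2 / ‖ξ - η‖ ^ 2 ∧
        ‖V ξ - V η‖ ^ 2 / ‖ξ - η‖ ^ 2 ≤ c₂ * (‖ξ‖ ^ 2 + ‖η‖ ^ 2) ^ ((p - 2) / 2) := by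
  have ha : 0 < (p - 2) / 2 + 1 := by linarith
  simp only [hV]
  generalize (p - 2) / 2 = a at ha ⊢
  obtain ⟨k₁, k₂, hk₁, hk₂, H⟩ := Vp_ordered (E := EuclideanSpace ℝ (Fin n)) a ha
  have hK : (0 : ℝ) < 2 ^ |a| := by positivity
  refine ⟨k₁ / 2 ^ |a|, k₂ * 2 ^ |a|, by positivity, by positivity, ?_⟩
  intro ξ η hne
  wlog h : ‖η‖ ≤ ‖ξ‖ generalizing ξ η
  · have := this η ξ hne.symm (le_of_not_ge h)
    rwa [add_comm (‖η‖ ^ 2), norm_sub_rev η ξ, norm_sub_rev (‖η‖ ^ a • η)] at this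
  have h0 : 0 < ‖ξ‖ := by
    rcases (norm_nonneg ξ).eq_or_lt with h1 | h1
    · rw [← h1] at h
      exact absurd ((norm_eq_zero.1 h1.symm).trans (norm_le_zero_iff.1 h).symm) hne
    · exact h1
  have hd : 0 < ‖ξ - η‖ ^ 2 := by
    have := norm_pos_iff.2 (sub_ne_zero.2 hne)
    positivity
  have hsq : ‖η‖ ^ 2 ≤ ‖ξ‖ ^ 2 := pow_le_pow_left₀ (norm_nonneg _) h 2
  obtain ⟨S1, S2⟩ := rpow_comparable a (‖ξ‖ ^ 2) (‖ξ‖ ^ 2 + ‖η‖ ^ 2) (by positivity)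
    (by nlinarith) (by linarith)
  have e : (‖ξ‖ ^ 2) ^ a = (‖ξ‖ ^ a) ^ 2 := (Real.rpow_pow_comm h0.le a 2).symm
  rw [e] at S1 S2
  obtain ⟨l, u⟩ := H ξ η h0 h
  constructor
  · rw [le_div_iff₀ hd]
    refine le_trans ?_ l
    rw [← mul_assoc k₁]
    refine mul_le_mul_of_nonneg_right ?_ hd.le
    rw [div_mul_eq_mul_div, div_le_iff₀ hK, mul_assoc]
    refine mul_le_mul_of_nonneg_left ?_ hk₁.le
    linarith
  · rw [div_le_iff₀ hd]
    refine u.trans ?_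
    rw [← mul_assoc k₂]
    refine mul_le_mul_of_nonneg_right ?_ hd.le
    rw [mul_assoc]
    exact mul_le_mul_of_nonneg_left S1 hk₂.le
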